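/- arXiv:1408.2245 — 3 statements merged into one kernel-verified Lean document; each statement's English description precedes it below -/
import Mathlib

section
/- Let a > 4/15. The inequality ψ(x+1) < L(x,a) holds for all x ∈ (−1, ∞) if and only if a ≥ a₁ = (40 + 3√205)/105. Moreover, for every a ≥ a₁ and every x > 0, one has L(x,a) − c₀(a) < ψ(x+1) < L(x,a), where c₀(a) = L(0,a) + γ = (1/(90a²+2))·ln((3a+1)/3) + (45a²/(90a²+2))·ln((15a−1)/(45a)) + γ, and c₀(a) is the best (smallest) possible such constant. -/
open Real Filter Set

/-- The digamma function ψ(x) = Γ'(x)/Γ(x), as the derivative of log ∘ Γ. -/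
noncomputable def digamma (x : ℝ) : ℝ := deriv (fun y : ℝ => Real.log (Real.Gamma y)) x

/-- L(x,a) = (1/(90a²+2))·ln(x²+x+(3a+1)/3) + (45a²/(90a²+2))·ln(x²+x+(15a−1)/(45a)). -/
noncomputable def L (x a : ℝ) : ℝ :=
  (1 / (90 * a ^ 2 + 2)) * Real.log (x ^ 2 + x + (3 * a + 1) / 3) +
    (45 * a ^ 2 / (90 * a ^ 2 + 2)) * Real.log (x ^ 2 + x + (15 * a - 1) / (45 * a))

/-- c₀(a) = L(0,a) + γ. -/
noncomputable def c₀ (a : ℝ) : ℝ := L 0 a + Real.eulerMascheroniConstant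

open Topology

/-- The difference `L(x,a) - ψ(x+1)`. -/
noncomputable def diffL (a x : ℝ) : ℝ := L x a - digamma (x + 1)

lemma pos_of_step (g : ℝ → ℝ) (hg : Tendsto g atTop (𝓝 0)) (x0 : ℝ)
    (h : ∀ x, x0 < x → g (x + 1) < g x) (x : ℝ) (hx : x0 < x) : 0 < g x := by
  have hanti : StrictAnti (fun n : ℕ => g (x + n)) := by
    apply strictAnti_nat_of_succ_lt
    intro n
    have := h (x + n) (by have : (0 : ℝ) ≤ n := Nat.cast_nonneg n
                          linarith)
    push_cast
    rwa [← add_assoc]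
  have hlim : Tendsto (fun n : ℕ => g (x + n)) atTop (𝓝 0) :=
    hg.comp (tendsto_atTop_add_const_left _ _ tendsto_natCast_atTop_atTop)
  have h1 : 0 ≤ g (x + (1 : ℕ)) := hanti.antitone.le_of_tendsto hlim 1
  have h2 := h x hx
  push_cast at h1
  linarith

lemma differentiableAt_logGamma {x : ℝ} (hx : 0 < x) :
    DifferentiableAt ℝ (fun y : ℝ => Real.log (Real.Gamma y)) x := by
  apply DifferentiableAt.log
  · apply Real.differentiableAt_Gamma
    intro m
    have : (0 : ℝ) ≤ m := Nat.cast_nonneg m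
    linarith
  · exact (Real.Gamma_pos_of_pos hx).ne'

lemma digamma_eq {x : ℝ} (hx : 0 < x) : digamma x = deriv Real.Gamma x / Real.Gamma x := by
  unfold digamma
  apply deriv.log
  · apply Real.differentiableAt_Gamma
    intro m
    have : (0 : ℝ) ≤ m := Nat.cast_nonneg m
    linarith
  · exact (Real.Gamma_pos_of_pos hx).ne'

lemma digamma_one' : digamma 1 = - Real.eulerMascheroniConstant := by
  rw [digamma_eq one_pos, Real.Gamma_one, Real.eulerMascheroniConstant_eq_neg_deriv]
  simp

lemma digamma_add_one {x : ℝ} (hx : 0 < x) : digamma (x + 1) = digamma x + 1 / x := by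
  have h1 : HasDerivAt (fun y : ℝ => Real.log (Real.Gamma (y + 1))) (digamma (x + 1)) x :=
    (differentiableAt_logGamma (x := x + 1) (by linarith)).hasDerivAt.comp_add_const x 1
  have h2 : HasDerivAt (fun y : ℝ => Real.log (Real.Gamma y) + Real.log y)
      (digamma x + 1 / x) x := by
    have := (differentiableAt_logGamma hx).hasDerivAt.add (Real.hasDerivAt_log hx.ne')
    rw [one_div]
    exact this
  have h3 : (fun y : ℝ => Real.log (Real.Gamma (y + 1))) =ᶠ[𝓝 x]
      (fun y : ℝ => Real.log (Real.Gamma y) + Real.log y) := by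
    filter_upwards [lt_mem_nhds hx] with y hy
    rw [Real.Gamma_add_one hy.ne', Real.log_mul hy.ne' (Real.Gamma_pos_of_pos hy).ne', add_comm]
  exact h1.unique (h2.congr_of_eventuallyEq h3)

lemma logGamma_slope {x : ℝ} (hx : 0 < x) :
    slope (Real.log ∘ Real.Gamma) x (x + 1) = Real.log x := by
  rw [slope_def_field]
  simp only [Function.comp]
  rw [Real.Gamma_add_one hx.ne', Real.log_mul hx.ne' (Real.Gamma_pos_of_pos hx).ne']
  ring

lemma digamma_le_log {x : ℝ} (hx : 0 < x) : digamma x ≤ Real.log x := by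
  have h := Real.convexOn_log_Gamma.deriv_le_slope (x := x) (y := x + 1) hx
    (by simp only [Set.mem_Ioi]; linarith) (by linarith) (differentiableAt_logGamma hx)
  rw [logGamma_slope hx] at h
  exact h

lemma log_le_digamma {x : ℝ} (hx : 0 < x) : Real.log x ≤ digamma (x + 1) := by
  have h := Real.convexOn_log_Gamma.slope_le_deriv (x := x) (y := x + 1) hx
    (by simp only [Set.mem_Ioi]; linarith) (by linarith)
    (differentiableAt_logGamma (by linarith))
  rw [logGamma_slope hx] at h
  exact h

lemma tendsto_log_aux (s p : ℝ) :
    Tendsto (fun x : ℝ => Real.log (x ^ 2 + s * x + p) - 2 * Real.log x) atTop (𝓝 0) := by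
  have h1 : Tendsto (fun x : ℝ => 1 + s * x⁻¹ + p * (x⁻¹ * x⁻¹)) atTop (𝓝 1) := by
    have h := tendsto_inv_atTop_zero (𝕜 := ℝ)
    have := ((h.const_mul s).const_add 1).add ((h.mul h).const_mul p)
    simpa using this
  have h2 := (Real.continuousAt_log (one_ne_zero)).tendsto.comp h1
  rw [Real.log_one] at h2
  refine h2.congr' ?_
  filter_upwards [eventually_gt_atTop 0, h1.eventually (lt_mem_nhds one_pos)] with x hx hpos
  simp only [Function.comp]
  have : x ^ 2 + s * x + p = (1 + s * x⁻¹ + p * (x⁻¹ * x⁻¹)) * x ^ 2 := by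
    field_simp
  rw [this, Real.log_mul hpos.ne' (by positivity), Real.log_pow]
  push_cast
  ring

lemma tendsto_L (a : ℝ) : Tendsto (fun x => L x a - Real.log x) atTop (𝓝 0) := by
  have h := ((tendsto_log_aux 1 ((3 * a + 1) / 3)).const_mul (1 / (90 * a ^ 2 + 2))).add
    ((tendsto_log_aux 1 ((15 * a - 1) / (45 * a))).const_mul (45 * a ^ 2 / (90 * a ^ 2 + 2)))
  simp only [mul_zero, add_zero, one_mul] at h
  refine h.congr ?_
  intro x
  unfold L
  have h3 : (90 * a ^ 2 + 2) ≠ 0 := by positivity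
  have : 1 / (90 * a ^ 2 + 2) * 2 + 45 * a ^ 2 / (90 * a ^ 2 + 2) * 2 = 1 := by
    field_simp
    ring
  linear_combination (- Real.log x) * this

lemma tendsto_digamma : Tendsto (fun x => digamma (x + 1) - Real.log x) atTop (𝓝 0) := by
  have h1 : Tendsto (fun x : ℝ => 1 / x) atTop (𝓝 0) := by
    simpa using tendsto_inv_atTop_zero (𝕜 := ℝ)
  refine tendsto_of_tendsto_of_tendsto_of_le_of_le' tendsto_const_nhds h1 ?_ ?_
  · filter_upwards [eventually_gt_atTop 0] with x hx
    linarith [log_le_digamma hx]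
  · filter_upwards [eventually_gt_atTop 0] with x hx
    linarith [digamma_le_log hx, digamma_add_one hx]

lemma tendsto_diffL (a : ℝ) : Tendsto (diffL a) atTop (𝓝 0) := by
  have := (tendsto_L a).sub tendsto_digamma
  rw [sub_zero] at this
  refine this.congr ?_
  intro x
  unfold diffL
  ring

lemma argp_pos {a : ℝ} (ha : 4 / 15 < a) (x : ℝ) : 0 < x ^ 2 + x + (3 * a + 1) / 3 := by
  nlinarith [sq_nonneg (x + 1 / 2)]

lemma argq_pos {a : ℝ} (ha : 4 / 15 < a) (x : ℝ) :
    0 < x ^ 2 + x + (15 * a - 1) / (45 * a) := by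
  have : 1 / 4 < (15 * a - 1) / (45 * a) := by
    rw [lt_div_iff₀ (by linarith)]
    linarith
  nlinarith [sq_nonneg (x + 1 / 2)]

lemma hasDerivAt_L {a : ℝ} (ha : 4 / 15 < a) (x : ℝ) :
    HasDerivAt (fun y => L y a)
      ((1 / (90 * a ^ 2 + 2)) * ((2 * x + 1) / (x ^ 2 + x + (3 * a + 1) / 3)) +
       (45 * a ^ 2 / (90 * a ^ 2 + 2)) *
        ((2 * x + 1) / (x ^ 2 + x + (15 * a - 1) / (45 * a)))) x := by
  have key : ∀ p : ℝ, HasDerivAt (fun y : ℝ => y ^ 2 + y + p) (2 * x + 1) x := by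
    intro p
    have := (((hasDerivAt_id x).pow 2).add (hasDerivAt_id x)).add_const p
    simpa using this
  exact (((key _).log (argp_pos ha x).ne').const_mul _).add
    (((key _).log (argq_pos ha x).ne').const_mul _)

/-- The numerator of the derivative of the step function. -/
noncomputable def numD (a u : ℝ) : ℝ :=
  ((3 * a + 1) / 3) ^ 2 * ((15 * a - 1) / (45 * a)) ^ 2 +
    (315 * a ^ 2 - 240 * a - 7) / (2025 * a) * u

lemma step_eq {a x : ℝ} (hx : -1 < x) :
    diffL a (x + 1) - diffL a x = L (x + 1) a - L x a - 1 / (x + 1) := by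
  unfold diffL
  rw [digamma_add_one (x := x + 1) (by linarith)]
  ring

lemma hasDerivAt_step {a : ℝ} (ha : 4 / 15 < a) {x : ℝ} (hx : -1 < x) :
    ∃ c : ℝ, 0 < c ∧ HasDerivAt (fun y => L (y + 1) a - L y a - 1 / (y + 1))
      (c * numD a ((x + 1) ^ 2)) x := by
  have h1 := (hasDerivAt_L ha (x + 1)).comp_add_const x 1
  have h2 := hasDerivAt_L ha x
  have hx1 : 0 < x + 1 := by linarith
  have h3 : HasDerivAt (fun y : ℝ => 1 / (y + 1)) (-(1 / (x + 1) ^ 2)) x := by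
    have := ((hasDerivAt_id x).add_const 1).inv hx1.ne'
    simp only [id] at this
    have e : (fun y : ℝ => 1 / (y + 1)) = (fun x : ℝ => x + 1)⁻¹ := by
      funext y; simp
    rw [e]
    refine this.congr_deriv ?_
    ring
  have h := (h1.sub h2).sub h3
  have p1 := argp_pos ha x
  have p2 := argp_pos ha (x + 1)
  have q1 := argq_pos ha x
  have q2 := argq_pos ha (x + 1)
  refine ⟨1 / ((x + 1) ^ 2 * (x ^ 2 + x + (3 * a + 1) / 3) *
    ((x + 1) ^ 2 + (x + 1) + (3 * a + 1) / 3) * (x ^ 2 + x + (15 * a - 1) / (45 * a)) *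
    ((x + 1) ^ 2 + (x + 1) + (15 * a - 1) / (45 * a))), by positivity, ?_⟩
  refine h.congr_deriv ?_
  unfold numD
  have ha0 : a ≠ 0 := by linarith
  have hA : (90 * a ^ 2 + 2) ≠ 0 := by positivity
  have hq : (15 * a - 1) / (45 * a) = 1 / 3 - 1 / (45 * a) := by
    field_simp
    ring
  have e1 : ∀ p : ℝ, 0 < x ^ 2 + x + p → 0 < (x + 1) ^ 2 + (x + 1) + p →
      (2 * (x + 1) + 1) / ((x + 1) ^ 2 + (x + 1) + p) - (2 * x + 1) / (x ^ 2 + x + p) =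
      2 * (p - (x + 1) ^ 2) / ((x ^ 2 + x + p) * ((x + 1) ^ 2 + (x + 1) + p)) := by
    intro p h1 h2
    rw [div_sub_div _ _ h2.ne' h1.ne', div_eq_div_iff (by positivity) (by positivity)]
    ring
  have E1 := e1 _ p1 p2
  have E2 := e1 _ q1 q2
  have hP : ∀ p : ℝ, (x ^ 2 + x + p) * ((x + 1) ^ 2 + (x + 1) + p) =
    ((x + 1) ^ 2 + p) ^ 2 - (x + 1) ^ 2 := by intro p; ring
  have P1 := mul_pos p1 p2
  have P2 := mul_pos q1 q2
  rw [hP] at E1 E2 P1 P2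
  have key : 1 / (90 * a ^ 2 + 2) * (2 * ((3 * a + 1) / 3 - (x + 1) ^ 2) /
        (((x + 1) ^ 2 + (3 * a + 1) / 3) ^ 2 - (x + 1) ^ 2)) +
      45 * a ^ 2 / (90 * a ^ 2 + 2) * (2 * ((15 * a - 1) / (45 * a) - (x + 1) ^ 2) /
        (((x + 1) ^ 2 + (15 * a - 1) / (45 * a)) ^ 2 - (x + 1) ^ 2)) + 1 / (x + 1) ^ 2 =
      1 / ((x + 1) ^ 2 * (((x + 1) ^ 2 + (3 * a + 1) / 3) ^ 2 - (x + 1) ^ 2) *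
        (((x + 1) ^ 2 + (15 * a - 1) / (45 * a)) ^ 2 - (x + 1) ^ 2)) * numD a ((x + 1) ^ 2) := by
    have hu : 0 < (x + 1) ^ 2 := by positivity
    generalize (x + 1) ^ 2 = u at *
    generalize hPP : (u + (3 * a + 1) / 3) ^ 2 - u = P at *
    generalize hQQ : (u + (15 * a - 1) / (45 * a)) ^ 2 - u = Q at *
    have num : 1 / (90 * a ^ 2 + 2) * (2 * ((3 * a + 1) / 3 - u)) * u * Q +
      45 * a ^ 2 / (90 * a ^ 2 + 2) * (2 * ((15 * a - 1) / (45 * a) - u)) * u * P + P * Q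
      = numD a u := by
      rw [← hPP, ← hQQ]
      unfold numD
      field_simp
      ring
    rw [← num]
    have := P1.ne'
    have := P2.ne'
    have := hu.ne'
    generalize 1 / (90 * a ^ 2 + 2) = A
    generalize 45 * a ^ 2 / (90 * a ^ 2 + 2) = B
    generalize (15 * a - 1) / (45 * a) = q
    generalize (3 * a + 1) / 3 = p
    field_simp
  unfold numD at key
  have hden : (x + 1) ^ 2 * (x ^ 2 + x + (3 * a + 1) / 3) *
    ((x + 1) ^ 2 + (x + 1) + (3 * a + 1) / 3) * (x ^ 2 + x + (15 * a - 1) / (45 * a)) *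
    ((x + 1) ^ 2 + (x + 1) + (15 * a - 1) / (45 * a)) =
    (x + 1) ^ 2 * (((x + 1) ^ 2 + (3 * a + 1) / 3) ^ 2 - (x + 1) ^ 2) *
        (((x + 1) ^ 2 + (15 * a - 1) / (45 * a)) ^ 2 - (x + 1) ^ 2) := by
    rw [← hP, ← hP]; ring
  rw [hden, ← key, ← E1, ← E2]
  ring

lemma a1_iff {a : ℝ} (ha : 4 / 15 < a) :
    (40 + 3 * Real.sqrt 205) / 105 ≤ a ↔ 0 ≤ 315 * a ^ 2 - 240 * a - 7 := by
  have hs : Real.sqrt 205 ^ 2 = 205 := Real.sq_sqrt (by norm_num)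
  have hs0 : 0 < Real.sqrt 205 := Real.sqrt_pos.mpr (by norm_num)
  have hs1 : 14 < Real.sqrt 205 := by
    rw [Real.lt_sqrt (by norm_num)]; norm_num
  have : 35 * (315 * a ^ 2 - 240 * a - 7) =
      (105 * a - 40 - 3 * Real.sqrt 205) * (105 * a - 40 + 3 * Real.sqrt 205) := by
    linear_combination (9 : ℝ) * hs
  have hpos : 0 < 105 * a - 40 + 3 * Real.sqrt 205 := by linarith
  constructor
  · intro h
    have : 0 ≤ 105 * a - 40 - 3 * Real.sqrt 205 := by linarith
    have := mul_nonneg this hpos.le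
    linarith
  · intro h
    have : 0 ≤ 105 * a - 40 - 3 * Real.sqrt 205 := by
      by_contra hc
      push Not at hc
      have := mul_neg_of_neg_of_pos hc hpos
      linarith
    linarith

lemma step_strictMono {a : ℝ} (ha : 4 / 15 < a) (h : 0 ≤ 315 * a ^ 2 - 240 * a - 7) :
    StrictMonoOn (fun y => L (y + 1) a - L y a - 1 / (y + 1)) (Set.Ioi (-1)) := by
  apply strictMonoOn_of_deriv_pos (convex_Ioi _)
  · intro x hx
    obtain ⟨c, _, hc⟩ := hasDerivAt_step ha hx
    exact hc.continuousAt.continuousWithinAt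
  · intro x hx
    rw [interior_Ioi] at hx
    obtain ⟨c, hc0, hc⟩ := hasDerivAt_step ha hx
    rw [hc.deriv]
    apply mul_pos hc0
    unfold numD
    have h1 : 0 < (15 * a - 1) / (45 * a) := by
      apply div_pos <;> linarith
    have h2 : 0 < a := by linarith
    positivity

lemma tendsto_step (a : ℝ) : Tendsto (fun x => diffL a (x + 1) - diffL a x) atTop (𝓝 0) := by
  have := ((tendsto_diffL a).comp (tendsto_atTop_add_const_right _ 1 tendsto_id)).sub
    (tendsto_diffL a)
  simpa using this

lemma step_neg {a : ℝ} (ha : 4 / 15 < a) (h : 0 ≤ 315 * a ^ 2 - 240 * a - 7) (x : ℝ)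
    (hx : -1 < x) : diffL a (x + 1) - diffL a x < 0 := by
  have := pos_of_step (fun x => -(diffL a (x + 1) - diffL a x))
    (by simpa using (tendsto_step a).neg) (-1) ?_ x hx
  · simpa using this
  · intro y hy
    rw [step_eq hy, step_eq (by linarith : -1 < y + 1)]
    apply neg_lt_neg
    exact step_strictMono ha h hy (by simp only [Set.mem_Ioi]; linarith) (by linarith)

lemma diffL_pos {a : ℝ} (ha : 4 / 15 < a) (h : 0 ≤ 315 * a ^ 2 - 240 * a - 7) (x : ℝ)
    (hx : -1 < x) : 0 < diffL a x :=
  pos_of_step (diffL a) (tendsto_diffL a) (-1)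
    (fun y hy => by linarith [step_neg ha h y hy]) x hx

lemma diffL_anti {a : ℝ} (ha : 4 / 15 < a) (h : 0 ≤ 315 * a ^ 2 - 240 * a - 7) (x s : ℝ)
    (hx : -1 < x) (hs : 0 < s) : diffL a (x + s) < diffL a x := by
  have := pos_of_step (fun x => diffL a x - diffL a (x + s)) ?_ (-1) ?_ x hx
  · simpa using this
  · have := (tendsto_diffL a).sub
      ((tendsto_diffL a).comp (tendsto_atTop_add_const_right _ s tendsto_id))
    simpa using this
  · intro y hy
    have h1 := step_strictMono ha h hy (b := y + s)
      (by simp only [Set.mem_Ioi] at *; linarith) (by linarith)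
    simp only at h1
    rw [← step_eq hy, ← step_eq (by linarith : -1 < y + s)] at h1
    have : y + 1 + s = y + s + 1 := by ring
    rw [this]
    linarith

lemma exists_neg {a : ℝ} (ha : 4 / 15 < a) (h : 315 * a ^ 2 - 240 * a - 7 < 0) :
    ∃ x, -1 < x ∧ diffL a x < 0 := by
  have hT : ∃ T : ℝ, 0 < T ∧ ∀ x, T < x → numD a ((x + 1) ^ 2) < 0 := by
    set k := (315 * a ^ 2 - 240 * a - 7) / (2025 * a) with hk
    have hk0 : k < 0 := div_neg_of_neg_of_pos h (by linarith)
    set K := ((3 * a + 1) / 3) ^ 2 * ((15 * a - 1) / (45 * a)) ^ 2 with hK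
    have hK0 : 0 ≤ K := by positivity
    refine ⟨K / (-k) + 1, by have := div_nonneg hK0 (neg_pos.mpr hk0).le; linarith, ?_⟩
    intro x hx
    unfold numD
    rw [← hk, ← hK]
    have hd := div_nonneg hK0 (neg_pos.mpr hk0).le
    have h1 : K / (-k) < (x + 1) ^ 2 := by nlinarith
    rw [div_lt_iff₀ (neg_pos.mpr hk0)] at h1
    linarith
  obtain ⟨T, hT0, hT⟩ := hT
  have hmono : StrictAntiOn (fun y => L (y + 1) a - L y a - 1 / (y + 1)) (Set.Ioi T) := by
    apply strictAntiOn_of_deriv_neg (convex_Ioi _)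
    · intro x hx
      obtain ⟨c, _, hc⟩ := hasDerivAt_step ha (x := x) (by simp only [Set.mem_Ioi] at hx; linarith)
      exact hc.continuousAt.continuousWithinAt
    · intro x hx
      rw [interior_Ioi] at hx
      obtain ⟨c, hc0, hc⟩ := hasDerivAt_step ha (x := x) (by simp only [Set.mem_Ioi] at hx; linarith)
      rw [hc.deriv]
      exact mul_neg_of_pos_of_neg hc0 (hT x hx)
  have hstep : ∀ x, T < x → 0 < diffL a (x + 1) - diffL a x := by
    intro x hx
    refine pos_of_step (fun x => diffL a (x + 1) - diffL a x) (tendsto_step a) T ?_ x hx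
    intro y hy
    rw [step_eq (by linarith : -1 < y), step_eq (by linarith : -1 < y + 1)]
    exact hmono hy (by simp only [Set.mem_Ioi]; linarith) (by linarith)
  have := pos_of_step (fun x => -diffL a x) (by simpa using (tendsto_diffL a).neg) T
    (fun x hx => by have := hstep x hx; linarith) (T + 1) (by linarith)
  exact ⟨T + 1, by linarith, by linarith⟩

lemma continuousAt_digamma_one : ContinuousAt digamma 1 := by
  have hopen : IsOpen {z : ℂ | 0 < z.re} := isOpen_lt continuous_const Complex.continuous_re
  have hdiff : ∀ z : ℂ, 0 < z.re → DifferentiableAt ℂ Complex.Gamma z := by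
    intro z hz
    apply Complex.differentiableAt_Gamma
    intro m hm
    rw [hm] at hz
    simp only [Complex.neg_re, Complex.natCast_re] at hz
    have : (0 : ℝ) ≤ m := Nat.cast_nonneg m
    linarith
  have hd : DifferentiableOn ℂ Complex.Gamma {z : ℂ | 0 < z.re} :=
    fun z hz => (hdiff z hz).differentiableWithinAt
  have hc : ContinuousAt (deriv Complex.Gamma) ((1 : ℝ) : ℂ) :=
    ((hd.deriv hopen).differentiableAt (hopen.mem_nhds (by simp))).continuousAt
  have hc2 : ContinuousAt (fun x : ℝ => (deriv Complex.Gamma (x : ℂ)).re / Real.Gamma x) 1 := by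
    apply ContinuousAt.div
    · exact Complex.continuous_re.continuousAt.comp
        (ContinuousAt.comp (f := fun x : ℝ => (x : ℂ)) hc Complex.continuous_ofReal.continuousAt)
    · apply DifferentiableAt.continuousAt (𝕜 := ℝ)
      apply Real.differentiableAt_Gamma
      intro m
      have : (0 : ℝ) ≤ m := Nat.cast_nonneg m
      linarith
    · simp
  refine hc2.congr ?_
  filter_upwards [lt_mem_nhds one_pos] with x hx
  rw [digamma_eq hx]
  congr 1
  have h1 := (hdiff (x : ℂ) (by simpa using hx)).hasDerivAt.real_of_complex
  exact h1.deriv.symm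

lemma c0_eq (a : ℝ) : c₀ a = diffL a 0 := by
  unfold c₀ diffL
  rw [zero_add, digamma_one']
  ring

theorem stmt_11 :
    (∀ a : ℝ, 4 / 15 < a →
      ((∀ x : ℝ, -1 < x → digamma (x + 1) < L x a) ↔ (40 + 3 * Real.sqrt 205) / 105 ≤ a)) ∧
    (∀ a : ℝ, (40 + 3 * Real.sqrt 205) / 105 ≤ a →
      (∀ x : ℝ, 0 < x → L x a - c₀ a < digamma (x + 1) ∧ digamma (x + 1) < L x a) ∧
      (∀ c : ℝ, (∀ x : ℝ, 0 < x → L x a - c < digamma (x + 1)) → c₀ a ≤ c)) := by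
  refine ⟨?_, ?_⟩
  · intro a ha
    rw [a1_iff ha]
    constructor
    · intro h
      by_contra hc
      push Not at hc
      obtain ⟨x, hx, hneg⟩ := exists_neg ha hc
      have := h x hx
      unfold diffL at hneg
      linarith
    · intro h x hx
      have := diffL_pos ha h x hx
      unfold diffL at this
      linarith
  · intro a ha1
    have ha : 4 / 15 < a := by
      have := Real.sqrt_nonneg 205
      linarith
    have h := (a1_iff ha).mp ha1
    refine ⟨?_, ?_⟩
    · intro x hx
      have h1 := diffL_pos ha h x (by linarith)
      have h2 := diffL_anti ha h 0 x (by norm_num) hx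
      rw [zero_add, ← c0_eq] at h2
      unfold diffL at h1 h2
      constructor <;> linarith
    · intro c hc
      rw [c0_eq]
      have hcont : ContinuousAt (diffL a) 0 := by
        apply ContinuousAt.sub
        · exact (hasDerivAt_L ha 0).continuousAt
        · apply ContinuousAt.comp (f := fun x : ℝ => x + 1) (g := digamma)
          · rw [zero_add]; exact continuousAt_digamma_one
          · fun_prop
      have hlim : Tendsto (diffL a) (𝓝[>] 0) (𝓝 (diffL a 0)) :=
        hcont.tendsto.mono_left nhdsWithin_le_nhds
      refine le_of_tendsto hlim ?_
      filter_upwards [self_mem_nhdsWithin] with x hx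
      have := hc x hx
      unfold diffL
      linarith
end

section
/- Let a₁ = (40 + 3√205)/105. Then lim_{x→∞} x⁸·(ψ(x+1) − L(x,a₁)) = −2/1225; that is, ψ(x+1) − L(x,a₁) tends to zero at the rate x^{−8} as x → ∞. -/
open Real Filter Set

open Topology Asymptotics

lemma aux_sign (F : ℝ → ℝ) (h0 : Tendsto F atTop (𝓝 0))
    (hd : ∀ᶠ s in atTop, F s - F (s + 1) ≤ 0) : ∀ᶠ s in atTop, F s ≤ 0 := by
  obtain ⟨N, hN⟩ := eventually_atTop.1 hd
  filter_upwards [eventually_ge_atTop N] with s hs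
  have h1 : ∀ n : ℕ, F s ≤ F (s + n) := by
    intro n
    induction n with
    | zero => simp
    | succ n ih =>
      have := hN (s + n) (by linarith [(Nat.cast_nonneg n : (0 : ℝ) ≤ n)])
      push_cast
      rw [← add_assoc]
      linarith
  have h2 : Tendsto (fun n : ℕ => F (s + n)) atTop (𝓝 0) :=
    h0.comp (tendsto_atTop_add_const_left _ _ tendsto_natCast_atTop_atTop)
  exact ge_of_tendsto' h2 h1

lemma aux_H : Tendsto (fun s : ℝ => s ^ 9 * (1 / s ^ 8 - 1 / (s + 1) ^ 8)) atTop (𝓝 8) := by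
  have h : Tendsto (fun z : ℝ => (8 + 28 * z + 56 * z ^ 2 + 70 * z ^ 3 + 56 * z ^ 4 + 28 * z ^ 5
      + 8 * z ^ 6 + z ^ 7) / (1 + z) ^ 8) (𝓝 0) (𝓝 8) := by
    have : ContinuousAt (fun z : ℝ => (8 + 28 * z + 56 * z ^ 2 + 70 * z ^ 3 + 56 * z ^ 4
      + 28 * z ^ 5 + 8 * z ^ 6 + z ^ 7) / (1 + z) ^ 8) 0 := by
      apply ContinuousAt.div <;> [fun_prop; fun_prop; norm_num]
    simpa [ContinuousAt] using this
  refine (h.comp tendsto_inv_atTop_zero).congr' ?_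
  filter_upwards [eventually_gt_atTop 0] with s hs
  simp only [Function.comp]
  have : s + 1 ≠ 0 := by positivity
  have : 1 + s ≠ 0 := by positivity
  field_simp
  ring

lemma aux_upper (F : ℝ → ℝ) (l : ℝ) (h0 : Tendsto F atTop (𝓝 0))
    (hd : Tendsto (fun s => s ^ 9 * (F s - F (s + 1))) atTop (𝓝 (8 * l))) (ε : ℝ) (hε : 0 < ε) :
    ∀ᶠ s in atTop, s ^ 8 * F s ≤ l + ε := by
  have hH0 : Tendsto (fun s : ℝ => 1 / s ^ 8) atTop (𝓝 0) := by
    have := (tendsto_pow_atTop (α := ℝ) (n := 8) (by norm_num)).inv_tendsto_atTop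
    refine this.congr (fun s => ?_)
    simp
  have h := aux_sign (fun s => F s - (l + ε) * (1 / s ^ 8))
    (by simpa using h0.sub (hH0.const_mul (l + ε))) ?_
  · filter_upwards [h, eventually_gt_atTop 0] with s hs h0
    have : F s ≤ (l + ε) * (1 / s ^ 8) := by linarith
    rw [mul_one_div, le_div_iff₀ (by positivity)] at this
    linarith
  · have h1 := hd.sub (aux_H.const_mul (l + ε))
    have h2 : 8 * l - (l + ε) * 8 < 0 := by linarith
    filter_upwards [h1.eventually_lt_const h2, eventually_gt_atTop 0] with s hs h0
    have h3 : s ^ 9 * (F s - (l + ε) * (1 / s ^ 8) - (F (s + 1) - (l + ε) * (1 / (s + 1) ^ 8))) < 0 := by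
      linarith
    by_contra hc
    push Not at hc
    have : 0 ≤ s ^ 9 * (F s - (l + ε) * (1 / s ^ 8) - (F (s + 1) - (l + ε) * (1 / (s + 1) ^ 8))) := by
      positivity
    linarith

lemma aux_main (F : ℝ → ℝ) (l : ℝ) (h0 : Tendsto F atTop (𝓝 0))
    (hd : Tendsto (fun s => s ^ 9 * (F s - F (s + 1))) atTop (𝓝 (8 * l))) :
    Tendsto (fun s => s ^ 8 * F s) atTop (𝓝 l) := by
  rw [tendsto_order]
  constructor
  · intro a ha
    have h := aux_upper (fun s => - F s) (-l) (by simpa using h0.neg)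
      (by have := hd.neg
          convert this using 2 <;> ring) ((l - a) / 2) (by linarith)
    filter_upwards [h] with s hs
    linarith
  · intro a ha
    filter_upwards [aux_upper F l h0 hd ((a - l) / 2) (by linarith)] with s hs
    linarith

lemma aux_log : (fun y : ℝ => (y + y ^ 2 / 2 + y ^ 3 / 3 + y ^ 4 / 4 + y ^ 5 / 5 + y ^ 6 / 6
    + y ^ 7 / 7 + y ^ 8 / 8 + y ^ 9 / 9) + Real.log (1 - y)) =O[𝓝 0] fun y => y ^ 10 := by
  refine IsBigO.of_bound 2 ?_
  have : ∀ᶠ y : ℝ in 𝓝 0, |y| < 1 / 2 := by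
    have : ContinuousAt (fun y : ℝ => |y|) 0 := by fun_prop
    exact this.eventually_lt_const (by norm_num)
  filter_upwards [this] with y hy
  have h := Real.abs_log_sub_add_sum_range_le (x := y) (by linarith) 9
  norm_num [Finset.sum_range_succ] at h
  simp only [Real.norm_eq_abs, abs_pow]
  refine h.trans ?_
  rw [div_le_iff₀ (by linarith)]
  have : 0 ≤ |y| ^ 10 := by positivity
  nlinarith

lemma aux_D (c : ℝ) : Tendsto (fun z : ℝ => (Real.log (1 + z + c * z ^ 2)
    - Real.log (1 - z + c * z ^ 2) - 2 * (z + (1 - 3 * c) / 3 * z ^ 3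
      + (1 - 5 * c + 5 * c ^ 2) / 5 * z ^ 5 + (1 - 7 * c + 14 * c ^ 2 - 7 * c ^ 3) / 7 * z ^ 7
      + (1 - 9 * c + 27 * c ^ 2 - 30 * c ^ 3 + 9 * c ^ 4) / 9 * z ^ 9)) / z ^ 9) (𝓝 0) (𝓝 0) := by
  have hy : ∀ k : ℝ, (fun z : ℝ => k * z - c * z ^ 2) =O[𝓝 0] fun z => z := by
    intro k
    have h1 : (fun z : ℝ => k - c * z) =O[𝓝 0] fun _ => (1 : ℝ) := by
      have : ContinuousAt (fun z : ℝ => k - c * z) 0 := by fun_prop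
      exact this.isBigO_one ℝ
    have := h1.mul (isBigO_refl (fun z : ℝ => z) (𝓝 0))
    refine (this.congr ?_ ?_) <;> intro z <;> ring
  have ht : ∀ k : ℝ, Tendsto (fun z : ℝ => k * z - c * z ^ 2) (𝓝 0) (𝓝 0) := by
    intro k
    have : ContinuousAt (fun z : ℝ => k * z - c * z ^ 2) 0 := by fun_prop
    simpa [ContinuousAt] using this
  have h1 := (aux_log.comp_tendsto (ht (-1))).trans ((hy (-1)).pow 10)
  have h2 := (aux_log.comp_tendsto (ht 1)).trans ((hy 1).pow 10)
  have h3 : (fun z : ℝ => z ^ 10 * (8 * c^2*z + (-14)*c^3*z + (10)*c^4*z + (-2)*c^5*z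
      + (28)*c^4*z^3 + (-14)*c^5*z^3 + (2)*c^6*z^3 + (56/3)*c^6*z^5 + (-2)*c^7*z^5
      + (2)*c^8*z^7)) =O[𝓝 0] fun z => z ^ 10 := by
    have h4 : (fun z : ℝ => (8 * c^2*z + (-14)*c^3*z + (10)*c^4*z + (-2)*c^5*z
      + (28)*c^4*z^3 + (-14)*c^5*z^3 + (2)*c^6*z^3 + (56/3)*c^6*z^5 + (-2)*c^7*z^5
      + (2)*c^8*z^7)) =O[𝓝 0] fun _ => (1 : ℝ) := by
      refine Tendsto.isBigO_one ℝ (c := (0 : ℝ)) ?_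
      refine Continuous.tendsto' (by fun_prop) _ _ (by simp)
    simpa using (isBigO_refl (fun z : ℝ => z ^ 10) (𝓝 0)).mul h4
  have h5 := ((h1.sub h2).add h3).trans_isLittleO
    (isLittleO_pow_pow (𝕜 := ℝ) (m := 9) (n := 10) (by norm_num))
  have h6 := h5.tendsto_div_nhds_zero
  refine h6.congr ?_
  intro z
  congr 1
  simp only [Function.comp]
  rw [show 1 - (-1 * z - c * z ^ 2) = 1 + z + c * z ^ 2 by ring,
    show 1 - (1 * z - c * z ^ 2) = 1 - z + c * z ^ 2 by ring]
  ring

lemma aux_hasDeriv (x : ℝ) (hx : 0 < x) :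
    HasDerivAt (Real.log ∘ Real.Gamma) (digamma x) x := by
  have h : DifferentiableAt ℝ Real.Gamma x := Real.differentiableAt_Gamma (fun m => by
    have : (0 : ℝ) ≤ m := Nat.cast_nonneg m
    linarith)
  exact (h.log (Real.Gamma_pos_of_pos hx).ne').hasDerivAt

lemma aux_logGamma (x : ℝ) (hx : 0 < x) :
    Real.log (Real.Gamma (x + 1)) = Real.log x + Real.log (Real.Gamma x) := by
  rw [Real.Gamma_add_one hx.ne', Real.log_mul hx.ne' (Real.Gamma_pos_of_pos hx).ne']

lemma digamma_step (x : ℝ) (hx : 0 < x) : digamma (x + 1) = digamma x + 1 / x := by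
  have h1 := (aux_hasDeriv (x + 1) (by linarith)).comp_add_const x 1
  have h2 := (Real.hasDerivAt_log hx.ne').add (aux_hasDeriv x hx)
  have h3 := h2.congr_of_eventuallyEq (f₁ := fun y => (Real.log ∘ Real.Gamma) (y + 1)) (by
    filter_upwards [eventually_gt_nhds hx] with y hy
    exact aux_logGamma y hy)
  rw [h1.unique h3]
  ring

lemma digamma_bounds (x : ℝ) (hx : 0 < x) :
    Real.log x - 1 / x ≤ digamma x ∧ digamma x ≤ Real.log x := by
  have hx1 : 0 < x + 1 := by linarith
  have hs : slope (Real.log ∘ Real.Gamma) x (x + 1) = Real.log x := by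
    rw [slope_def_field]
    simp only [Function.comp]
    rw [aux_logGamma x hx]
    ring
  have h1 := Real.convexOn_log_Gamma.le_slope_of_hasDerivAt (x := x) (y := x + 1) hx hx1
    (by linarith) (aux_hasDeriv x hx)
  have h2 := Real.convexOn_log_Gamma.slope_le_of_hasDerivAt (x := x) (y := x + 1) hx hx1
    (by linarith) (aux_hasDeriv (x + 1) hx1)
  rw [hs] at h1 h2
  rw [digamma_step x hx] at h2
  exact ⟨by linarith, h1⟩

lemma digamma_tendsto : Tendsto (fun s => digamma s - Real.log s) atTop (𝓝 0) := by
  have h : Tendsto (fun s : ℝ => -(1 / s)) atTop (𝓝 0) := by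
    simpa using (tendsto_inv_atTop_zero (𝕜 := ℝ)).neg
  refine tendsto_of_tendsto_of_tendsto_of_le_of_le' h tendsto_const_nhds ?_ ?_
  · filter_upwards [eventually_gt_atTop 0] with s hs
    linarith [(digamma_bounds s hs).1]
  · filter_upwards [eventually_gt_atTop 0] with s hs
    linarith [(digamma_bounds s hs).2]

lemma aux_logquad (k c : ℝ) : ∀ᶠ s : ℝ in atTop, Real.log (s ^ 2 + k * s + c)
    = 2 * Real.log s + Real.log (1 + k * s⁻¹ + c * s⁻¹ ^ 2) := by
  have h : Tendsto (fun z : ℝ => 1 + k * z + c * z ^ 2) (𝓝 0) (𝓝 1) := by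
    have : ContinuousAt (fun z : ℝ => 1 + k * z + c * z ^ 2) 0 := by fun_prop
    simpa [ContinuousAt] using this
  filter_upwards [(h.comp tendsto_inv_atTop_zero).eventually_const_lt (zero_lt_one),
    eventually_gt_atTop 0] with s hs h0
  simp only [Function.comp] at hs
  rw [show s ^ 2 + k * s + c = s ^ 2 * (1 + k * s⁻¹ + c * s⁻¹ ^ 2) by field_simp,
    Real.log_mul (by positivity) hs.ne', Real.log_pow]
  norm_num

lemma aux_logquad_lim (k c : ℝ) :
    Tendsto (fun s : ℝ => Real.log (1 + k * s⁻¹ + c * s⁻¹ ^ 2)) atTop (𝓝 0) := by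
  have h : Tendsto (fun z : ℝ => Real.log (1 + k * z + c * z ^ 2)) (𝓝 0) (𝓝 0) := by
    have : ContinuousAt (fun z : ℝ => Real.log (1 + k * z + c * z ^ 2)) 0 := by
      apply ContinuousAt.log
      · fun_prop
      · norm_num
    simpa [ContinuousAt] using this
  exact h.comp tendsto_inv_atTop_zero

lemma aux_params : ∃ A B c d : ℝ,
    (∀ x, L x ((40 + 3 * Real.sqrt 205) / 105)
      = A * Real.log (x ^ 2 + x + c) + B * Real.log (x ^ 2 + x + d)) ∧
    A + B = 1 / 2 ∧ A * c + B * d = 1 / 6 ∧ A * c ^ 2 + B * d ^ 2 = 1 / 15 ∧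
    A * c ^ 3 + B * d ^ 3 = 4 / 105 ∧
    A * (1 - 9 * c + 27 * c ^ 2 - 30 * c ^ 3 + 9 * c ^ 4)
      + B * (1 - 9 * d + 27 * d ^ 2 - 30 * d ^ 3 + 9 * d ^ 4) = - 72 / 1225 := by
  set a := (40 + 3 * Real.sqrt 205) / 105 with ha
  have hq : Real.sqrt 205 ^ 2 = 205 := Real.sq_sqrt (by norm_num)
  have ha0 : 0 < a := by positivity
  have ha2 : 315 * a ^ 2 = 240 * a + 7 := by
    rw [ha]; linear_combination (315 * 9 / 105 ^ 2) * hq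
  have hd : (15 * a - 1) / (45 * a) = 23 / 21 - a := by
    rw [div_eq_iff (by positivity)]; linear_combination (1/7) * ha2
  have hne : 90 * a ^ 2 + 2 ≠ 0 := by positivity
  have hA : (1 / (90 * a ^ 2 + 2)) * (90 * a ^ 2 + 2) = 1 := by field_simp
  have hB : 45 * a ^ 2 / (90 * a ^ 2 + 2) = 1 / 2 - 1 / (90 * a ^ 2 + 2) := by
    field_simp; ring
  set A := 1 / (90 * a ^ 2 + 2) with hAd
  have hA' : A * (480 * a + 28) = 7 := by linear_combination 7 * hA - 2 * A * ha2
  have hA2 : A = 1 / 4 - 70 / 123 * (a - 8 / 21) := by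
    have h : 480 * a + 28 ≠ 0 := by positivity
    apply mul_right_cancel₀ h
    rw [hA']
    linear_combination (70 / 123 * 480 / 315) * ha2
  have hc : (a + 1 / 3) ^ 2 = 10 / 7 * (a + 1 / 3) - 12 / 35 := by
    linear_combination (1 / 315) * ha2
  have hd2 : (23 / 21 - a) ^ 2 = 10 / 7 * (23 / 21 - a) - 12 / 35 := by
    linear_combination (1 / 315) * ha2
  have m0 : A + (1 / 2 - A) = 1 / 2 := by ring
  have m1 : A * (a + 1 / 3) + (1 / 2 - A) * (23 / 21 - a) = 1 / 6 := by
    rw [hA2]; linear_combination (-2 * 70 / 123 / 315) * ha2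
  have hL : ∀ x, L x a = A * Real.log (x ^ 2 + x + (a + 1 / 3))
      + (1 / 2 - A) * Real.log (x ^ 2 + x + (23 / 21 - a)) := by
    intro x
    rw [L, hd, hB, show (3 * a + 1) / 3 = a + 1 / 3 by ring]
  generalize a + 1 / 3 = c at *
  generalize 23 / 21 - a = d at *
  generalize 1 / 2 - A = B at *
  have m2 : A * c ^ 2 + B * d ^ 2 = 1 / 15 := by
    linear_combination A * hc + B * hd2 + 10 / 7 * m1 - 12 / 35 * m0
  have m3 : A * c ^ 3 + B * d ^ 3 = 4 / 105 := by
    linear_combination A * c * hc + B * d * hd2 + 10 / 7 * m2 - 12 / 35 * m1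
  have m4 : A * c ^ 4 + B * d ^ 4 = 10 / 7 * (4 / 105) - 12 / 35 * (1 / 15) := by
    linear_combination A * c ^ 2 * hc + B * d ^ 2 * hd2 + 10 / 7 * m3 - 12 / 35 * m2
  refine ⟨A, B, c, d, hL, m0, m1, m2, m3, ?_⟩
  linear_combination m0 - 9 * m1 + 27 * m2 - 30 * m3 + 9 * m4

theorem stmt_18 :
    Filter.Tendsto
      (fun x : ℝ => x ^ 8 * (digamma (x + 1) - L x ((40 + 3 * Real.sqrt 205) / 105)))
      Filter.atTop (nhds (-2 / 1225)) := by
  obtain ⟨A, B, c, d, hL, m0, m1, m2, m3, m4⟩ := aux_params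
  set F : ℝ → ℝ := fun s => digamma s
    - L (s - 1) ((40 + 3 * Real.sqrt 205) / 105) with hF
  have hLm : ∀ s, L (s - 1) ((40 + 3 * Real.sqrt 205) / 105)
      = A * Real.log (s ^ 2 + (-1) * s + c) + B * Real.log (s ^ 2 + (-1) * s + d) := by
    intro s
    rw [hL]; congr 3 <;> ring_nf
  have hLp : ∀ s, L (s + 1 - 1) ((40 + 3 * Real.sqrt 205) / 105)
      = A * Real.log (s ^ 2 + 1 * s + c) + B * Real.log (s ^ 2 + 1 * s + d) := by
    intro s
    rw [hL]; congr 3 <;> ring_nf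
  have hF0 : Tendsto F atTop (𝓝 0) := by
    have := digamma_tendsto.sub (((aux_logquad_lim (-1) c).const_mul A).add
      ((aux_logquad_lim (-1) d).const_mul B))
    simp only [mul_zero, add_zero, sub_zero] at this
    refine this.congr' ?_
    filter_upwards [aux_logquad (-1) c, aux_logquad (-1) d] with s h1 h2
    simp only [hF]
    rw [hLm, h1, h2]
    linear_combination (2 * Real.log s) * m0
  have hFd : Tendsto (fun s => s ^ 9 * (F s - F (s + 1))) atTop (𝓝 (8 * (-2 / 1225))) := by
    have := ((((aux_D c).comp tendsto_inv_atTop_zero).const_mul A).add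
      (((aux_D d).comp tendsto_inv_atTop_zero).const_mul B)).add_const (8 * (-2 / 1225) : ℝ)
    simp only [mul_zero, add_zero, zero_add] at this
    refine this.congr' ?_
    filter_upwards [aux_logquad (-1) c, aux_logquad (-1) d, aux_logquad 1 c, aux_logquad 1 d,
      eventually_gt_atTop 0] with s h1 h2 h3 h4 hs
    simp only [hF, Function.comp]
    rw [hLm, hLp, h1, h2, h3, h4, digamma_step s hs]
    have e1 : ∀ c : ℝ, 1 + 1 * s⁻¹ + c * s⁻¹ ^ 2 = 1 + s⁻¹ + c * s⁻¹ ^ 2 := by intro c; ring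
    have e2 : ∀ c : ℝ, 1 + (-1) * s⁻¹ + c * s⁻¹ ^ 2 = 1 - s⁻¹ + c * s⁻¹ ^ 2 := by intro c; ring
    rw [e1, e1, e2, e2]
    generalize Real.log (1 + s⁻¹ + c * s⁻¹ ^ 2) = l1
    generalize Real.log (1 + s⁻¹ + d * s⁻¹ ^ 2) = l2
    generalize Real.log (1 - s⁻¹ + c * s⁻¹ ^ 2) = l3
    generalize Real.log (1 - s⁻¹ + d * s⁻¹ ^ 2) = l4
    have hz : s * s⁻¹ = 1 := mul_inv_cancel₀ hs.ne'
    have hz9 : s ^ 9 = 1 / (s⁻¹) ^ 9 := by field_simp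
    rw [hz9, one_div s]
    have hzne : s⁻¹ ≠ 0 := by positivity
    generalize s⁻¹ = z at *
    have hz99 : z ^ 9 ≠ 0 := by positivity
    have key : 2 * (A * (z + (1 - 3 * c) / 3 * z ^ 3
      + (1 - 5 * c + 5 * c ^ 2) / 5 * z ^ 5 + (1 - 7 * c + 14 * c ^ 2 - 7 * c ^ 3) / 7 * z ^ 7
      + (1 - 9 * c + 27 * c ^ 2 - 30 * c ^ 3 + 9 * c ^ 4) / 9 * z ^ 9))
      + 2 * (B * (z + (1 - 3 * d) / 3 * z ^ 3
      + (1 - 5 * d + 5 * d ^ 2) / 5 * z ^ 5 + (1 - 7 * d + 14 * d ^ 2 - 7 * d ^ 3) / 7 * z ^ 7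
      + (1 - 9 * d + 27 * d ^ 2 - 30 * d ^ 3 + 9 * d ^ 4) / 9 * z ^ 9))
      = z + 8 * (-2 / 1225) * z ^ 9 := by
      linear_combination (2 * z + 2 / 3 * z ^ 3 + 2 / 5 * z ^ 5 + 2 / 7 * z ^ 7) * m0
        + (- 2 * z ^ 3 - 2 * z ^ 5 - 2 * z ^ 7) * m1 + (2 * z ^ 5 + 4 * z ^ 7) * m2
        - 2 * z ^ 7 * m3 + 2 / 9 * z ^ 9 * m4
    rw [← mul_div_assoc, ← mul_div_assoc, ← add_div, one_div, ← div_eq_inv_mul,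
      div_add' _ _ _ hz99]
    congr 1
    linear_combination (-1) * key
  have h := aux_main F _ hF0 hFd
  have h1 := h.comp (tendsto_atTop_add_const_right atTop (1 : ℝ) tendsto_id)
  have h2 : Tendsto (fun x : ℝ => (1 - (x + 1)⁻¹) ^ 8) atTop (𝓝 1) := by
    have := ((tendsto_inv_atTop_zero (𝕜 := ℝ)).comp
      (tendsto_atTop_add_const_right atTop (1 : ℝ) tendsto_id)).const_sub 1 |>.pow 8
    simpa using this
  have h3 := h2.mul h1
  rw [one_mul] at h3
  refine h3.congr' ?_
  filter_upwards [eventually_gt_atTop 0] with x hx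
  simp only [Function.comp, id, hF, add_sub_cancel_right]
  have : x + 1 ≠ 0 := by positivity
  rw [← mul_assoc, ← mul_pow]
  congr 2
  field_simp
  ring
end

section
/- Define l_n(a) = H_n − L(n,a) for n ∈ ℕ, n ≥ 1, and a > 1/15. Let a₁ = (40 + 3√205)/105, and let a₀ ≈ 0.512967071402 be the unique root of −γ = L(0,a) on (1/15, ∞). Then for all n ≥ 1 one has l_n(a₁) < γ ≤ l_n(a₀); moreover, for every fixed n ≥ 1, the map a ↦ l_n(a) is strictly decreasing on (1/15, ∞). -/
open Real Filter Set

/-- The sequence lₙ(a) = Hₙ − L(n,a). -/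
noncomputable def l (n : ℕ) (a : ℝ) : ℝ := (harmonic n : ℝ) - L n a

lemma log_lt_aux {u v : ℝ} (hv : 0 < v) (huv : v < u) :
    2 / (u - v) * (Real.log u - Real.log v) < 1 / u + 1 / v := by
  have hu : 0 < u := hv.trans huv
  have h1 : 0 < Real.log (u / v) := Real.log_pos (by rw [lt_div_iff₀ hv]; linarith)
  have h2 := Real.self_lt_sinh_iff.2 h1
  rw [Real.sinh_log (div_pos hu hv), Real.log_div hu.ne' hv.ne'] at h2
  have h3 : 0 < u - v := by linarith
  calc 2 / (u - v) * (Real.log u - Real.log v)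
      < 2 / (u - v) * ((u / v - (u / v)⁻¹) / 2) := by gcongr
    _ = 1 / u + 1 / v := by field_simp; ring

lemma d_pos {a : ℝ} (ha : 1 / 15 < a) : 0 < (15 * a - 1) / (45 * a) := by
  apply div_pos <;> linarith

lemma L_hasDerivAt {x a : ℝ} (hx : 0 ≤ x) (ha : 1 / 15 < a) :
    ∃ d, 0 < d ∧ HasDerivAt (fun a => L x a) d a := by
  have ha0 : 0 < a := by linarith
  have hd := d_pos ha
  set v := x ^ 2 + x + (15 * a - 1) / (45 * a) with hv
  set u := x ^ 2 + x + (3 * a + 1) / 3 with hu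
  have hvp : 0 < v := by positivity
  have hup : 0 < u := by positivity
  have huv : u - v = (45 * a ^ 2 + 1) / (45 * a) := by
    rw [hu, hv]; field_simp; ring
  have huv' : v < u := by
    have : 0 < u - v := by rw [huv]; positivity
    linarith
  have key := log_lt_aux hvp huv'
  refine ⟨1 / (90 * a ^ 2 + 2) * ((1 / u + 1 / v) - 2 / (u - v) * (Real.log u - Real.log v)),
    mul_pos (by positivity) (by linarith), ?_⟩
  have e1 : HasDerivAt (fun a : ℝ => x ^ 2 + x + (3 * a + 1) / 3) 1 a := by
    have := ((((hasDerivAt_id a).const_mul 3).add_const 1).div_const 3).const_add (x ^ 2 + x)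
    simpa using this
  have e2 : HasDerivAt (fun a : ℝ => x ^ 2 + x + (15 * a - 1) / (45 * a))
      (((15 * 1) * (45 * a) - (15 * a - 1) * (45 * 1)) / (45 * a) ^ 2) a := by
    have := ((((hasDerivAt_id a).const_mul 15).sub_const 1).div
      ((hasDerivAt_id a).const_mul 45) (by simp; positivity)).const_add (x ^ 2 + x)
    simpa using this
  have e3 : HasDerivAt (fun a : ℝ => 90 * a ^ 2 + 2) (90 * (2 * a)) a := by
    have := ((hasDerivAt_pow 2 a).const_mul 90).add_const 2
    simpa using this
  have e4 : HasDerivAt (fun a : ℝ => 45 * a ^ 2) (45 * (2 * a)) a := by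
    have := ((hasDerivAt_pow 2 a).const_mul 45)
    simpa using this
  have n3 : 90 * a ^ 2 + 2 ≠ 0 := by positivity
  have f1 := ((hasDerivAt_const a (1 : ℝ)).div e3 n3).mul (e1.log hup.ne')
  have f2 := (e4.div e3 n3).mul (e2.log hvp.ne')
  have f := f1.add f2
  refine HasDerivAt.congr_deriv (f := fun a => L x a) f ?_
  rw [huv]
  simp only [Pi.div_apply]
  rw [← hu, ← hv]
  generalize Real.log u = lu
  generalize Real.log v = lv
  clear_value u v
  field_simp
  ring

lemma L_strictMono {x : ℝ} (hx : 0 ≤ x) :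
    StrictMonoOn (fun a => L x a) (Set.Ioi (1 / 15)) := by
  apply strictMonoOn_of_deriv_pos (convex_Ioi _)
  · intro a ha
    obtain ⟨d, -, h⟩ := L_hasDerivAt hx ha
    exact h.continuousAt.continuousWithinAt
  · intro a ha
    rw [interior_Ioi] at ha
    obtain ⟨d, hd, h⟩ := L_hasDerivAt hx ha
    rw [h.deriv]; exact hd

lemma log_tendsto (e c : ℝ) :
    Tendsto (fun x : ℝ => Real.log (x ^ 2 + e * x + c) - 2 * Real.log x) atTop (nhds 0) := by
  have h1 : Tendsto (fun x : ℝ => 1 + e * x⁻¹ + c * (x⁻¹) ^ 2) atTop (nhds 1) := by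
    have := ((tendsto_const_nhds (x := (1 : ℝ))).add
      ((tendsto_inv_atTop_zero (𝕜 := ℝ)).const_mul e)).add
      (((tendsto_inv_atTop_zero (𝕜 := ℝ)).pow 2).const_mul c)
    simpa using this
  have h2 := h1.log one_ne_zero
  rw [Real.log_one] at h2
  refine h2.congr' ?_
  filter_upwards [eventually_gt_atTop 0, h1.eventually_ne one_ne_zero] with x hx hne
  have : x ^ 2 + e * x + c = x ^ 2 * (1 + e * x⁻¹ + c * (x⁻¹) ^ 2) := by
    field_simp
  rw [this, Real.log_mul (by positivity) hne, Real.log_pow]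
  push_cast; ring

lemma weights {a : ℝ} : 1 / (90 * a ^ 2 + 2) + 45 * a ^ 2 / (90 * a ^ 2 + 2) = 1 / 2 := by
  have : 90 * a ^ 2 + 2 ≠ 0 := by positivity
  field_simp; ring

lemma L_tendsto (a e : ℝ) (F : ℝ → ℝ) (hF : ∀ x, F x = (1 / (90 * a ^ 2 + 2)) *
    Real.log (x ^ 2 + e * x + (3 * a + 1) / 3) +
    (45 * a ^ 2 / (90 * a ^ 2 + 2)) * Real.log (x ^ 2 + e * x + (15 * a - 1) / (45 * a))) :
    Tendsto (fun x : ℝ => F x - Real.log x) atTop (nhds 0) := by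
  have := ((log_tendsto e ((3 * a + 1) / 3)).const_mul (1 / (90 * a ^ 2 + 2))).add
    ((log_tendsto e ((15 * a - 1) / (45 * a))).const_mul (45 * a ^ 2 / (90 * a ^ 2 + 2)))
  simp only [mul_zero, add_zero] at this
  refine this.congr fun x => ?_
  rw [hF]
  linear_combination (-2 * Real.log x) * weights (a := a)

lemma l_tendsto (a : ℝ) :
    Tendsto (fun n : ℕ => l n a) atTop (nhds Real.eulerMascheroniConstant) := by
  have h1 := (L_tendsto a 1 (fun x => L x a) (fun x => by simp [L])).comp
    tendsto_natCast_atTop_atTop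
  have := Real.tendsto_harmonic_sub_log.sub h1
  simp only [sub_zero] at this
  refine this.congr fun n => ?_
  simp [l]

/-- The increment `1/m - (L(m,a) - L(m-1,a))`. -/
noncomputable def G (a m : ℝ) : ℝ := 1 / m - (L m a - L (m - 1) a)

lemma L_pred (m a : ℝ) : L (m - 1) a = (1 / (90 * a ^ 2 + 2)) *
    Real.log (m ^ 2 + (-1) * m + (3 * a + 1) / 3) +
    (45 * a ^ 2 / (90 * a ^ 2 + 2)) * Real.log (m ^ 2 + (-1) * m + (15 * a - 1) / (45 * a)) := by
  have : (m - 1) ^ 2 + (m - 1) = m ^ 2 + (-1) * m := by ring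
  rw [L, this]

lemma G_tendsto (a : ℝ) : Tendsto (G a) atTop (nhds 0) := by
  have h1 := (L_tendsto a 1 (fun x => L x a) (fun x => by simp [L]))
  have h2 := (L_tendsto a (-1) (fun x => L (x - 1) a) (fun x => L_pred x a))
  have := (tendsto_inv_atTop_zero (𝕜 := ℝ)).sub (h1.sub h2)
  simp only [sub_zero] at this
  refine this.congr fun x => ?_
  simp [G]

lemma log_deriv (e c m : ℝ) (h : m ^ 2 + e * m + c ≠ 0) :
    HasDerivAt (fun m : ℝ => Real.log (m ^ 2 + e * m + c))
      ((2 * m + e) / (m ^ 2 + e * m + c)) m := by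
  have := (((hasDerivAt_pow 2 m).add ((hasDerivAt_id m).const_mul e)).add_const c)
  have h2 := HasDerivAt.log (f := fun m : ℝ => m ^ 2 + e * m + c) this h
  simpa using h2

lemma frac_aux {m c : ℝ} (h1 : m ^ 2 + 1 * m + c ≠ 0) (h2 : m ^ 2 + (-1) * m + c ≠ 0) :
    (2 * m + 1) / (m ^ 2 + 1 * m + c) - (2 * m + (-1)) / (m ^ 2 + (-1) * m + c)
      = -2 * ((m ^ 2 - c) / ((m ^ 2 + c) ^ 2 - m ^ 2)) := by
  have : (m ^ 2 + c) ^ 2 - m ^ 2 = (m ^ 2 + 1 * m + c) * (m ^ 2 + (-1) * m + c) := by ring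
  rw [this, div_sub_div _ _ h1 h2, ← mul_div_assoc]
  congr 1
  ring

/-- Closed form of the derivative; everything is symmetric in `a`, `-1/(45a)`. -/
lemma rat_aux {a b k M α β : ℝ} (ha : 0 < a) (hb : 0 < b) (hab : a * b = 1 / 45) (hk : a - b = k)
    (hα : α = 2 * (M + 1 / 3) + k) (hβ : β = (M + 1 / 3) ^ 2 + 1 / 45 - M)
    (hc : 0 < (M + (1 / 3 + a)) ^ 2 - M) (hd : 0 < (M + (1 / 3 - b)) ^ 2 - M) :
    0 < β ^ 2 + α * β * k - α ^ 2 / 45 ∧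
    b / (a + b) * ((M - (1 / 3 + a)) / ((M + (1 / 3 + a)) ^ 2 - M)) +
      a / (a + b) * ((M - (1 / 3 - b)) / ((M + (1 / 3 - b)) ^ 2 - M)) =
      ((M - 1 / 3) * (α * k + β) + α / 45) / (β ^ 2 + α * β * k - α ^ 2 / 45) := by
  have q1 : (M + (1 / 3 + a)) ^ 2 - M = α * a + β := by
    rw [hα, hβ, ← hk]; linear_combination hab
  have q2 : (M + (1 / 3 - b)) ^ 2 - M = β - α * b := by
    rw [hα, hβ, ← hk]; linear_combination hab
  have hS : β ^ 2 + α * β * k - α ^ 2 / 45 = (α * a + β) * (β - α * b) := by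
    rw [← hk]; linear_combination α ^ 2 * hab
  rw [q1] at hc ⊢
  rw [q2] at hd ⊢
  rw [hS]
  refine ⟨mul_pos hc hd, ?_⟩
  have hs : a + b ≠ 0 := by positivity
  have hR : (M - 1 / 3) * (α * k + β) + α / 45
      = (M - 1 / 3) * (α * (a - b) + β) + α * (a * b) := by rw [hk, hab]; ring
  rw [hR]
  have hc' := hc.ne'
  have hd' := hd.ne'
  rw [div_mul_div_comm, div_mul_div_comm, div_add_div _ _ (mul_ne_zero hs hc') (mul_ne_zero hs hd'),
    div_eq_div_iff (mul_ne_zero (mul_ne_zero hs hc') (mul_ne_zero hs hd')) (mul_ne_zero hc' hd')]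
  ring

lemma G_deriv {a m : ℝ} (ha : 1 / 15 < a) (hm : 1 ≤ m) : ∃ S, 0 < S ∧
    HasDerivAt (G a) (-(1 / m ^ 2) +
      ((m ^ 2 - 1 / 3) * ((2 * (m ^ 2 + 1 / 3) + (a - 1 / (45 * a))) * (a - 1 / (45 * a)) +
        ((m ^ 2 + 1 / 3) ^ 2 + 1 / 45 - m ^ 2)) +
        (2 * (m ^ 2 + 1 / 3) + (a - 1 / (45 * a))) / 45) / S) m ∧
    S = ((m ^ 2 + 1 / 3) ^ 2 + 1 / 45 - m ^ 2) ^ 2 +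
      (2 * (m ^ 2 + 1 / 3) + (a - 1 / (45 * a))) * ((m ^ 2 + 1 / 3) ^ 2 + 1 / 45 - m ^ 2) *
        (a - 1 / (45 * a)) - (2 * (m ^ 2 + 1 / 3) + (a - 1 / (45 * a))) ^ 2 / 45 := by
  have ha0 : 0 < a := by linarith
  have hm0 : 0 < m := by linarith
  have hd := d_pos ha
  have hmm : 0 ≤ m ^ 2 + (-1) * m := by nlinarith
  have p1 : 0 < m ^ 2 + 1 * m + (3 * a + 1) / 3 := by positivity
  have p2 : 0 < m ^ 2 + (-1) * m + (3 * a + 1) / 3 := by positivity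
  have p3 : 0 < m ^ 2 + 1 * m + (15 * a - 1) / (45 * a) := by positivity
  have p4 : 0 < m ^ 2 + (-1) * m + (15 * a - 1) / (45 * a) := by positivity
  have c1 : (3 * a + 1) / 3 = 1 / 3 + a := by ring
  have c2 : (15 * a - 1) / (45 * a) = 1 / 3 - 1 / (45 * a) := by field_simp; ring
  have d1 := ((log_deriv _ _ _ p1.ne').const_mul (1 / (90 * a ^ 2 + 2))).add
    ((log_deriv _ _ _ p3.ne').const_mul (45 * a ^ 2 / (90 * a ^ 2 + 2)))
  have d2 := ((log_deriv _ _ _ p2.ne').const_mul (1 / (90 * a ^ 2 + 2))).add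
    ((log_deriv _ _ _ p4.ne').const_mul (45 * a ^ 2 / (90 * a ^ 2 + 2)))
  have d0 := (hasDerivAt_inv hm0.ne').sub (d1.sub d2)
  obtain ⟨r1, r2⟩ := rat_aux (a := a) (b := 1 / (45 * a)) (M := m ^ 2) ha0 (by positivity)
    (by field_simp) rfl rfl rfl
    (by rw [← c1]; nlinarith [mul_pos p1 p2]) (by rw [← c2]; nlinarith [mul_pos p3 p4])
  refine ⟨_, r1, ?_, rfl⟩
  rw [← r2]
  have f1 := frac_aux p1.ne' p2.ne'
  have f2 := frac_aux p3.ne' p4.ne'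
  rw [c1] at f1
  rw [c2] at f2
  have w1 : 1 / (45 * a) / (a + 1 / (45 * a)) = 2 * (1 / (90 * a ^ 2 + 2)) := by
    field_simp; ring
  have w2 : a / (a + 1 / (45 * a)) = 2 * (45 * a ^ 2 / (90 * a ^ 2 + 2)) := by
    field_simp; ring
  rw [w1, w2]
  refine HasDerivAt.congr_deriv (HasDerivAt.congr_of_eventuallyEq d0
    (Filter.Eventually.of_forall fun x => ?_)) ?_
  · rw [G, L_pred, L]
    simp
  · rw [c1, c2]
    linear_combination -(1 / (90 * a ^ 2 + 2)) * f1 - (45 * a ^ 2 / (90 * a ^ 2 + 2)) * f2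

lemma neg_of_mono {f : ℝ → ℝ} (hf : StrictMonoOn f (Set.Ici 2)) (ht : Tendsto f atTop (nhds 0))
    {x : ℝ} (hx : 2 ≤ x) : f x < 0 := by
  have h1 : f x < f (x + 1) := hf hx (by simp; linarith) (by linarith)
  refine h1.trans_le (ge_of_tendsto ht ?_)
  filter_upwards [eventually_ge_atTop (x + 1)] with y hy
  exact hf.monotoneOn (by simp; linarith) (by simp; linarith) hy

lemma G_neg {m : ℝ} (hm : 2 ≤ m) : G (3 / 5) m < 0 := by
  refine neg_of_mono ?_ (G_tendsto _) hm
  apply strictMonoOn_of_deriv_pos (convex_Ici _)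
  · intro x hx
    obtain ⟨S, -, h, -⟩ := G_deriv (a := 3 / 5) (m := x) (by norm_num) (by simp at hx; linarith)
    exact h.continuousAt.continuousWithinAt
  · intro x hx
    rw [interior_Ici] at hx
    simp only [Set.mem_Ioi] at hx
    obtain ⟨S, hS, h, hS2⟩ := G_deriv (a := 3 / 5) (m := x) (by norm_num) (by linarith)
    rw [h.deriv]
    have hx2 : 4 < x ^ 2 := by nlinarith
    rw [neg_add_eq_sub, sub_pos, div_lt_div_iff₀ (by positivity) hS, ← sub_pos, hS2]
    norm_num
    generalize x ^ 2 = M at *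
    ring_nf
    linarith

lemma G_pos {a m : ℝ} (ha : 1 / 15 < a) (hk : a - 1 / (45 * a) = 16 / 21) (hm : 2 ≤ m) :
    0 < G a m := by
  have ht := (G_tendsto a).neg
  rw [neg_zero] at ht
  rw [← neg_lt_zero]
  refine neg_of_mono (f := fun x => - G a x) ?_ ht hm
  apply strictMonoOn_of_deriv_pos (convex_Ici _)
  · intro x hx
    obtain ⟨S, -, h, -⟩ := G_deriv (a := a) (m := x) ha (by simp at hx; linarith)
    exact h.neg.continuousAt.continuousWithinAt
  · intro x hx
    rw [interior_Ici] at hx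
    simp only [Set.mem_Ioi] at hx
    obtain ⟨S, hS, h, hS2⟩ := G_deriv (a := a) (m := x) ha (by linarith)
    rw [HasDerivAt.deriv (f := fun x => - G a x) h.neg, neg_pos, hk]
    rw [hk] at hS2
    have hx2 : 4 < x ^ 2 := by nlinarith
    rw [neg_add_eq_sub, sub_neg, div_lt_div_iff₀ hS (by positivity), ← sub_pos, hS2]
    generalize x ^ 2 = M at *
    ring_nf
    norm_num

lemma l_succ (n : ℕ) (a : ℝ) : l (n + 1) a - l n a = G a (n + 1) := by
  simp only [l, G, harmonic_succ]
  push_cast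
  rw [add_sub_cancel_right, one_div]
  ring

lemma gamma_lt {n : ℕ} (hn : 1 ≤ n) : Real.eulerMascheroniConstant < l n (3 / 5) := by
  have hstep : ∀ k : ℕ, 1 ≤ k → l (k + 1) (3 / 5) < l k (3 / 5) := fun k hk => by
    have h1 : (1 : ℝ) ≤ k := by exact_mod_cast hk
    have := G_neg (m := k + 1) (by linarith)
    rw [← l_succ] at this
    linarith
  refine lt_of_le_of_lt (le_of_tendsto (l_tendsto (3 / 5)) ?_) (hstep n hn)
  filter_upwards [eventually_ge_atTop (n + 1)] with k hk
  induction k, hk using Nat.le_induction with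
  | base => exact le_rfl
  | succ k hk ih => exact (hstep k (by omega)).le.trans ih

lemma lt_gamma {a : ℝ} (ha : 1 / 15 < a) (hk : a - 1 / (45 * a) = 16 / 21) {n : ℕ} (hn : 1 ≤ n) :
    l n a < Real.eulerMascheroniConstant := by
  have hstep : ∀ k : ℕ, 1 ≤ k → l k a < l (k + 1) a := fun k hk1 => by
    have h1 : (1 : ℝ) ≤ k := by exact_mod_cast hk1
    have := G_pos ha hk (m := k + 1) (by linarith)
    rw [← l_succ] at this
    linarith
  refine lt_of_lt_of_le (hstep n hn) (ge_of_tendsto (l_tendsto a) ?_)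
  filter_upwards [eventually_ge_atTop (n + 1)] with k hk
  induction k, hk using Nat.le_induction with
  | base => exact le_rfl
  | succ k hk ih => exact ih.trans (hstep k (by omega)).le

lemma l_anti (n : ℕ) : StrictAntiOn (fun a : ℝ => l n a) (Set.Ioi (1 / 15)) := by
  intro a ha b hb hab
  have := L_strictMono (x := n) (by positivity) ha hb hab
  simp only [l] at *
  linarith

lemma a1_bounds : 1 / 15 < (40 + 3 * Real.sqrt 205) / 105 ∧
    (40 + 3 * Real.sqrt 205) / 105 < 1 ∧
    (40 + 3 * Real.sqrt 205) / 105 - 1 / (45 * ((40 + 3 * Real.sqrt 205) / 105)) = 16 / 21 := by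
  have h0 := Real.sqrt_nonneg 205
  have h1 : Real.sqrt 205 < 15 := by rw [Real.sqrt_lt' (by norm_num)]; norm_num
  have h2 := Real.sq_sqrt (show (0 : ℝ) ≤ 205 by norm_num)
  refine ⟨by linarith, by linarith, ?_⟩
  generalize Real.sqrt 205 = w at *
  have : 40 + 3 * w ≠ 0 := by positivity
  field_simp
  nlinarith

lemma log_sm (i j k : ℤ) :
    Real.log ((2 : ℝ) ^ i * 3 ^ j * 5 ^ k) = i * Real.log 2 + j * Real.log 3 + k * Real.log 5 := by
  rw [Real.log_mul (by positivity) (by positivity), Real.log_mul (by positivity) (by positivity),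
    Real.log_zpow, Real.log_zpow, Real.log_zpow]

lemma L0_hi : -Real.eulerMascheroniConstant < L 0 (3 / 5) := by
  obtain ⟨h1, h2, h3⟩ := a1_bounds
  have hg : l 1 1 < Real.eulerMascheroniConstant :=
    (l_anti 1 h1 (show (1 / 15 : ℝ) < 1 by norm_num) h2).trans (lt_gamma h1 h3 le_rfl)
  have e1 := log_sm 1 (-1) 1
  have e2 : Real.log (104 / 45) ≤ Real.log ((2 : ℝ) ^ (-1 : ℤ) * 3 ^ (-3 : ℤ) * 5 ^ (3 : ℤ)) :=
    Real.log_le_log (by norm_num) (by norm_num)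
  rw [log_sm] at e2
  have e3 := Real.one_sub_inv_le_log_of_pos (show (0 : ℝ) < 14 / 15 by norm_num)
  have e4 := log_sm 3 (-3) 0
  norm_num [l, L] at hg e1 e2 e3 e4 ⊢
  linarith [Real.log_two_gt_d9, Real.log_two_lt_d9, Real.log_three_gt_d9, Real.log_three_lt_d9,
    Real.log_five_gt_d9, Real.log_five_lt_d9]

lemma L0_lo : L 0 (1 / 10) < -Real.eulerMascheroniConstant := by
  have hg := gamma_lt (n := 1) le_rfl
  have e1 : Real.log ((2 : ℝ) ^ (3 : ℤ) * 3 ^ (-1 : ℤ) * 5 ^ (0 : ℤ)) ≤ Real.log (44 / 15) :=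
    Real.log_le_log (by norm_num) (by norm_num)
  have e2 : Real.log ((2 : ℝ) ^ (-2 : ℤ) * 3 ^ (2 : ℤ) * 5 ^ (0 : ℤ)) ≤ Real.log (62 / 27) :=
    Real.log_le_log (by norm_num) (by norm_num)
  have e3 : Real.log (13 / 30) ≤ Real.log ((2 : ℝ) ^ (2 : ℤ) * 3 ^ (-2 : ℤ) * 5 ^ (0 : ℤ)) :=
    Real.log_le_log (by norm_num) (by norm_num)
  have e4 := log_sm 0 (-2) 0
  rw [log_sm] at e1 e2 e3
  norm_num [l, L] at hg e1 e2 e3 e4 ⊢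
  linarith [Real.log_two_gt_d9, Real.log_two_lt_d9, Real.log_three_gt_d9, Real.log_three_lt_d9,
    Real.log_five_gt_d9, Real.log_five_lt_d9]

/-- With a₁ = (40+3√205)/105 and a₀ the unique root of −γ = L(0,a) on (1/15,∞):
for all n ≥ 1, lₙ(a₁) < γ ≤ lₙ(a₀); and for each n ≥ 1, a ↦ lₙ(a) is strictly
decreasing on (1/15, ∞). -/
theorem stmt_19 :
    ∃ a₀ : ℝ, a₀ ∈ Set.Ioi (1 / 15 : ℝ) ∧
      (∀ a ∈ Set.Ioi (1 / 15 : ℝ), (-Real.eulerMascheroniConstant = L 0 a ↔ a = a₀)) ∧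
      (∀ n : ℕ, 1 ≤ n →
        l n ((40 + 3 * Real.sqrt 205) / 105) < Real.eulerMascheroniConstant ∧
          Real.eulerMascheroniConstant ≤ l n a₀) ∧
      (∀ n : ℕ, 1 ≤ n → StrictAntiOn (fun a : ℝ => l n a) (Set.Ioi (1 / 15))) := by
  have hcont : ContinuousOn (fun a => L 0 a) (Set.Icc (1 / 10) (3 / 5)) := by
    intro a ha
    obtain ⟨d, -, h⟩ := L_hasDerivAt (x := 0) le_rfl (show 1 / 15 < a by linarith [ha.1])
    exact h.continuousAt.continuousWithinAt
  obtain ⟨a₀, ha₀, hroot⟩ := intermediate_value_Icc (by norm_num) hcont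
    (show -Real.eulerMascheroniConstant ∈ Set.Icc _ _ from ⟨L0_lo.le, L0_hi.le⟩)
  have hmem : a₀ ∈ Set.Ioi (1 / 15 : ℝ) := by
    have := ha₀.1
    simp only [Set.mem_Ioi]; linarith
  refine ⟨a₀, hmem, ?_, ?_, fun n _ => l_anti n⟩
  · intro a ha
    constructor
    · intro h
      exact (L_strictMono (x := 0) le_rfl).injOn ha hmem (h.symm.trans hroot.symm)
    · rintro rfl
      exact hroot.symm
  · intro n hn
    obtain ⟨h1, h2, h3⟩ := a1_bounds
    refine ⟨lt_gamma h1 h3 hn, (gamma_lt hn).le.trans ?_⟩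
    exact (l_anti n).antitoneOn hmem (show (1 / 15 : ℝ) < 3 / 5 by norm_num) ha₀.2
end
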